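/- The Mellin transform of E_{α,β}^γ(-t) on (0, ∞) is Γ(s)Γ(γ-s)/(Γ(γ)Γ(β-αs)): for 0 < Re(s) < γ, and parameters 0 < α < 1, 0 < αγ ≤ β ≤ 1 (ensuring integrability), ∫_0^∞ E_{α,β}^γ(-t) t^{s-1} dt = Γ(s)Γ(γ-s)/(Γ(γ)Γ(β-αs)). -/

import Mathlib

open scoped BigOperators

/-- Pochhammer symbol `(γ)_k = γ(γ+1)⋯(γ+k-1)`. -/
noncomputable def poch (γ : ℝ) (k : ℕ) : ℝ := ∏ i ∈ Finset.range k, (γ + i)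

/-- The real-argument Prabhakar function `E_{α,β}^γ(x)`. -/
noncomputable def prabhakarR (α β γ : ℝ) (x : ℝ) : ℝ :=
  ∑' k : ℕ, poch γ k * x ^ k / (Nat.factorial k * Real.Gamma (α * k + β))

open MeasureTheory Filter Topology

/-- `AM n g`: `g` and its first `n` derivatives are nonnegative on the negative half-line. -/
def AM : ℕ → (ℝ → ℝ) → Prop
  | 0, g => ∀ u < 0, 0 ≤ g u
  | n + 1, g => (∀ u < 0, 0 ≤ g u) ∧ ∃ g' : ℝ → ℝ, (∀ u < 0, HasDerivAt g (g' u) u) ∧ AM n g'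

lemma AM.nonneg {n : ℕ} {g : ℝ → ℝ} (h : AM n g) : ∀ u < 0, 0 ≤ g u := by
  cases n with
  | zero => exact h
  | succ n => exact h.1

lemma AM.pred {n : ℕ} : ∀ {g : ℝ → ℝ}, AM (n + 1) g → AM n g := by
  induction n with
  | zero => intro g h; exact h.1
  | succ n ih =>
    rintro g ⟨h0, g', hd, h⟩
    exact ⟨h0, g', hd, ih h⟩

lemma AM.add {n : ℕ} : ∀ {f g : ℝ → ℝ}, AM n f → AM n g → AM n (fun u => f u + g u) := by
  induction n with
  | zero => intro f g hf hg u hu; exact add_nonneg (hf u hu) (hg u hu)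
  | succ n ih =>
    rintro f g ⟨hf0, f', hfd, hf⟩ ⟨hg0, g', hgd, hg⟩
    exact ⟨fun u hu => add_nonneg (hf0 u hu) (hg0 u hu), _,
      fun u hu => (hfd u hu).add (hgd u hu), ih hf hg⟩

lemma AM.mul {n : ℕ} : ∀ {f g : ℝ → ℝ}, AM n f → AM n g → AM n (fun u => f u * g u) := by
  induction n with
  | zero => intro f g hf hg u hu; exact mul_nonneg (hf u hu) (hg u hu)
  | succ n ih =>
    intro f g hf hg
    have hf1 := hf.pred
    have hg1 := hg.pred
    obtain ⟨hf0, f', hfd, hf⟩ := hf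
    obtain ⟨hg0, g', hgd, hg⟩ := hg
    exact ⟨fun u hu => mul_nonneg (hf0 u hu) (hg0 u hu), _,
      fun u hu => (hfd u hu).mul (hgd u hu), (ih hf hg1).add (ih hf1 hg)⟩

lemma AM.const {n : ℕ} : ∀ {c : ℝ}, 0 ≤ c → AM n (fun _ => c) := by
  induction n with
  | zero => intro c hc u hu; exact hc
  | succ n ih =>
    intro c hc
    exact ⟨fun u hu => hc, fun _ => 0, fun u hu => hasDerivAt_const u c, ih le_rfl⟩

lemma AM.rpow_neg {n : ℕ} : ∀ {a : ℝ}, 0 ≤ a → AM n (fun u => (-u) ^ (-a)) := by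
  induction n with
  | zero => intro a ha u hu; exact Real.rpow_nonneg (by linarith) _
  | succ n ih =>
    intro a ha
    refine ⟨fun u hu => Real.rpow_nonneg (by linarith) _, fun u => a * (-u) ^ (-(a + 1)), ?_,
      (AM.const ha).mul (ih (by linarith))⟩
    intro u hu
    have := (hasDerivAt_neg u).rpow_const (p := -a) (Or.inl (by linarith))
    convert this using 1
    rw [show -(a + 1) = -a - 1 by ring]; ring

lemma AM.stieltjes {α : ℝ} (h0 : 0 < α) (h1 : α < 1) {n : ℕ} :
    ∀ {γ : ℝ}, 0 < γ → AM n (fun u => (1 + (-u) ^ α) ^ (-γ)) := by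
  induction n with
  | zero =>
    intro a ha u hu
    have : 0 ≤ (-u) ^ α := Real.rpow_nonneg (by linarith) _
    exact Real.rpow_nonneg (by linarith) _
  | succ n ih =>
    intro γ hγ
    refine ⟨fun u hu => ?_, fun u => (γ * α) * ((-u) ^ (-(1 - α)) * (1 + (-u) ^ α) ^ (-(γ + 1))), ?_,
      (AM.const (by positivity)).mul ((AM.rpow_neg (by linarith)).mul (ih (by linarith)))⟩
    · have : 0 ≤ (-u) ^ α := Real.rpow_nonneg (by linarith) _
      exact Real.rpow_nonneg (by linarith) _
    intro u hu
    have hp : 0 ≤ (-u) ^ α := Real.rpow_nonneg (by linarith) _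
    have := (((hasDerivAt_neg u).rpow_const (p := α) (Or.inl (by linarith))).const_add 1).rpow_const
      (p := -γ) (Or.inl (by positivity))
    convert this using 1
    rw [show -(γ + 1) = -γ - 1 by ring, show -(1 - α) = α - 1 by ring]; ring

lemma AM.of_eq {n : ℕ} : ∀ {Φ : ℝ → ℝ} {G : ℕ → ℝ → ℝ}, AM n Φ → (∀ u < -1, G 0 u = Φ u) →
    (∀ m, ∀ u < -1, HasDerivAt (G m) (G (m + 1) u) u) → ∀ u < -1, 0 ≤ G n u := by
  induction n with
  | zero => intro Φ G h h0 hd u hu; rw [h0 u hu]; exact h u (by linarith)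
  | succ n ih =>
    rintro Φ G ⟨h, Φ', hd', h'⟩ h0 hd
    refine ih (Φ := Φ') (G := fun m => G (m + 1)) h' ?_ (fun m => hd (m + 1))
    intro u hu
    refine (hd 0 u hu).unique ((hd' u (by linarith)).congr_of_eventuallyEq ?_)
    filter_upwards [Iio_mem_nhds hu] with x hx using h0 x hx

lemma AM.taylor {n : ℕ} : ∀ {Φ : ℝ → ℝ} {G : ℕ → ℝ → ℝ}, AM n Φ → (∀ u < -1, G 0 u = Φ u) →
    (∀ m, ∀ u < -1, HasDerivAt (G m) (G (m + 1) u) u) → ∀ u, -2 ≤ u → u < 0 →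
      ∑ j ∈ Finset.range n, G j (-2) * (u + 2) ^ j / j.factorial ≤ Φ u := by
  induction n with
  | zero =>
    intro Φ G h h0 hd u hu hu'
    simpa using h u hu'
  | succ n ih =>
    rintro Φ G ⟨h, Φ', hd', h'⟩ h0 hd u hu hu'
    have h0' : ∀ u < -1, G 1 u = Φ' u := by
      intro u hu
      refine (hd 0 u hu).unique ((hd' u (by linarith)).congr_of_eventuallyEq ?_)
      filter_upwards [Iio_mem_nhds hu] with x hx using h0 x hx
    have key := ih (Φ := Φ') (G := fun m => G (m + 1)) h' h0' (fun m => hd (m + 1))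
    have hder : ∀ v < 0, HasDerivAt
        (fun v => Φ v - ∑ j ∈ Finset.range (n + 1), G j (-2) * (v + 2) ^ j / j.factorial)
        (Φ' v - ∑ j ∈ Finset.range n, G (j + 1) (-2) * (v + 2) ^ j / j.factorial) v := by
      intro v hv
      refine (hd' v hv).sub ?_
      have : HasDerivAt (fun v : ℝ => ∑ j ∈ Finset.range (n + 1),
          G j (-2) * (v + 2) ^ j / j.factorial)
          (∑ j ∈ Finset.range (n + 1),
          G j (-2) * (j * (v + 2) ^ (j - 1) * 1) / j.factorial) v := by
        refine HasDerivAt.fun_sum fun j _ => ?_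
        exact ((((hasDerivAt_id v).add_const 2).fun_pow j).const_mul _).div_const _
      refine this.congr_deriv ?_
      rw [Finset.sum_range_succ']
      simp only [Nat.cast_zero, zero_mul, mul_zero, zero_div, add_zero]
      refine Finset.sum_congr rfl fun j _ => ?_
      rw [Nat.factorial_succ]
      push_cast
      have : (j.factorial : ℝ) ≠ 0 := by positivity
      have : (j + 1 : ℝ) ≠ 0 := by positivity
      field_simp
    have hmono : MonotoneOn
        (fun v => Φ v - ∑ j ∈ Finset.range (n + 1), G j (-2) * (v + 2) ^ j / j.factorial)
        (Set.Ico (-2) 0) := by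
      refine monotoneOn_of_hasDerivWithinAt_nonneg (convex_Ico _ _)
        (fun v hv => (hder v hv.2).continuousAt.continuousWithinAt) 
        (fun v hv => ((hder v (interior_subset hv).2).hasDerivWithinAt)) ?_
      intro v hv
      have := interior_subset hv
      exact sub_nonneg.2 (key v this.1 this.2)
    have := hmono (a := -2) (b := u) ⟨le_rfl, by norm_num⟩ ⟨hu, hu'⟩ hu
    have e0 : ∑ j ∈ Finset.range (n + 1), G j (-2) * ((-2 : ℝ) + 2) ^ j / j.factorial = G 0 (-2) := by
      rw [Finset.sum_range_succ']
      simp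
    simp only [e0] at this
    rw [h0 (-2) (by norm_num)] at this
    linarith

lemma deriv_laplace {g : ℝ → ℝ} 
    (hg : ∀ u < -1, IntegrableOn (fun y => Real.exp (u * y) * g y) (Set.Ioi 0)) :
    ∀ u < -1, IntegrableOn (fun y => Real.exp (u * y) * (y * g y)) (Set.Ioi 0) ∧
      HasDerivAt (fun u => ∫ y in Set.Ioi (0 : ℝ), Real.exp (u * y) * g y)
        (∫ y in Set.Ioi (0 : ℝ), Real.exp (u * y) * (y * g y)) u := by
  intro u hu
  obtain ⟨ε, hε, hε'⟩ : ∃ ε : ℝ, 0 < ε ∧ u + 2 * ε < -1 := ⟨(-1 - u) / 4, by linarith, by linarith⟩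
  have hs : Set.Iio (u + ε) ∈ 𝓝 u := Iio_mem_nhds (by linarith)
  refine hasDerivAt_integral_of_dominated_loc_of_deriv_le (𝕜 := ℝ)
    (F := fun u y => Real.exp (u * y) * g y) (F' := fun u y => Real.exp (u * y) * (y * g y)) 
    (bound := fun y => ε⁻¹ * ‖Real.exp ((u + 2 * ε) * y) * g y‖) hs ?_ (hg u hu) ?_ ?_ ?_ ?_
  · filter_upwards [Iio_mem_nhds hu] with x hx using (hg x hx).1
  · have := (hg u hu).1.mul (g := fun y : ℝ => y) (by fun_prop)
    refine this.congr (.of_forall fun y => ?_)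
    simp only [Pi.mul_apply]; ring
  · filter_upwards [ae_restrict_mem measurableSet_Ioi] with y hy x hx
    have hy : 0 < y := hy
    have hx : x < u + ε := hx
    rw [norm_mul, norm_mul, norm_mul, ← mul_assoc, ← mul_assoc]
    refine mul_le_mul_of_nonneg_right ?_ (norm_nonneg _)
    rw [Real.norm_of_nonneg (Real.exp_nonneg _), Real.norm_of_nonneg (Real.exp_nonneg _),
      Real.norm_of_nonneg hy.le]
    have h1 : Real.exp (x * y) ≤ Real.exp ((u + ε) * y) := by gcongr
    have h2 : ε * y ≤ Real.exp (ε * y) := by linarith [Real.add_one_le_exp (ε * y)]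
    calc Real.exp (x * y) * y ≤ Real.exp ((u + ε) * y) * y := by gcongr
      _ = ε⁻¹ * (Real.exp ((u + ε) * y) * (ε * y)) := by field_simp
      _ ≤ ε⁻¹ * (Real.exp ((u + ε) * y) * Real.exp (ε * y)) := by gcongr
      _ = _ := by rw [← Real.exp_add]; ring_nf
  · exact (hg _ hε').norm.const_mul _
  · refine .of_forall fun y x hx => ?_
    have := (((hasDerivAt_id x).mul_const y).exp).mul_const (g y)
    refine this.congr_deriv ?_
    simp; ring

section core
variable {f Φ : ℝ → ℝ} 

lemma int_pow (hg : ∀ u < -1, IntegrableOn (fun y => Real.exp (u * y) * f y) (Set.Ioi 0)) (m : ℕ) :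
    ∀ u < -1, IntegrableOn (fun y => Real.exp (u * y) * (y ^ m * f y)) (Set.Ioi 0) := by
  induction m with
  | zero => simpa using hg
  | succ m ih =>
    intro u hu
    have := (deriv_laplace ih u hu).1
    refine this.congr (.of_forall fun y => ?_)
    simp only; ring

lemma int_pow_pow (hg : ∀ u < -1, IntegrableOn (fun y => Real.exp (u * y) * f y) (Set.Ioi 0))
    (m n : ℕ) : ∀ u < -1, IntegrableOn 
      (fun y => Real.exp (u * y) * (y ^ m * ((1 - Real.exp (-y)) ^ n * f y))) (Set.Ioi 0) := by
  intro u hu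
  have := (int_pow hg m u hu).bdd_mul (c := 1) (f := fun y : ℝ => (1 - Real.exp (-y)) ^ n)
    (Continuous.aestronglyMeasurable (by fun_prop)) ?_
  · refine this.congr (.of_forall fun y => ?_)
    simp only; ring
  · filter_upwards [ae_restrict_mem measurableSet_Ioi] with y hy
    have hy : 0 < y := hy
    have h1 : Real.exp (-y) ≤ 1 := Real.exp_le_one_iff.2 (by linarith)
    have h2 := Real.exp_pos (-y)
    rw [norm_pow]
    refine pow_le_one₀ (norm_nonneg _) ?_
    rw [Real.norm_of_nonneg (by linarith)]; linarith

lemma pos_pow_pow (hg : ∀ u < -1, IntegrableOn (fun y => Real.exp (u * y) * f y) (Set.Ioi 0))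
    (hΦ : ∀ n, AM n Φ) (hfΦ : ∀ u < -1, ∫ y in Set.Ioi (0 : ℝ), Real.exp (u * y) * f y = Φ u)
    (n : ℕ) : ∀ m, ∀ u < -1, 0 ≤ ∫ y in Set.Ioi (0 : ℝ), 
      Real.exp (u * y) * (y ^ m * ((1 - Real.exp (-y)) ^ n * f y)) := by
  induction n with
  | zero => 
    intro m
    refine AM.of_eq (n := m) (G := fun m u => ∫ y in Set.Ioi (0 : ℝ), 
      Real.exp (u * y) * (y ^ m * ((1 - Real.exp (-y)) ^ 0 * f y))) (hΦ m) (by simpa using hfΦ) ?_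
    intro m u hu
    simp only [pow_succ', mul_assoc]
    exact (deriv_laplace (int_pow_pow hg m 0) u hu).2
  | succ n ih =>
    intro m u hu
    have hd := fun u hu => (deriv_laplace (int_pow_pow hg m n) u hu).2
    have hmono : MonotoneOn (fun u => ∫ y in Set.Ioi (0 : ℝ), 
        Real.exp (u * y) * (y ^ m * ((1 - Real.exp (-y)) ^ n * f y))) (Set.Iio (-1)) := by
      refine monotoneOn_of_hasDerivWithinAt_nonneg (convex_Iio _)
        (fun v hv => (hd v hv).continuousAt.continuousWithinAt) 
        (fun v hv => ((hd v (interior_subset (s := Set.Iio (-1)) hv)).hasDerivWithinAt)) ?_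
      intro v hv
      have := ih (m + 1) v (interior_subset (s := Set.Iio (-1)) hv)
      simpa only [pow_succ', mul_assoc] using this
    have h1 := hmono (a := u - 1) (b := u) (by simp; linarith) hu (by linarith)
    have h2 : (∫ y in Set.Ioi (0 : ℝ), 
      Real.exp (u * y) * (y ^ m * ((1 - Real.exp (-y)) ^ (n + 1) * f y))) = 
       (∫ y in Set.Ioi (0 : ℝ), Real.exp (u * y) * (y ^ m * ((1 - Real.exp (-y)) ^ n * f y))) -
       ∫ y in Set.Ioi (0 : ℝ), Real.exp ((u - 1) * y) * (y ^ m * ((1 - Real.exp (-y)) ^ n * f y)) := by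
      rw [← integral_sub (int_pow_pow hg m n u hu) (int_pow_pow hg m n (u - 1) (by linarith))]
      refine integral_congr_ae (.of_forall fun y => ?_)
      simp only
      rw [show (u - 1) * y = u * y + -y by ring, Real.exp_add]
      ring
    rw [h2]
    linarith

/-- testing against continuous functions of `exp (-y)`. -/
lemma pos_test (hg : ∀ u < -1, IntegrableOn (fun y => Real.exp (u * y) * f y) (Set.Ioi 0))
    (hΦ : ∀ n, AM n Φ) (hfΦ : ∀ u < -1, ∫ y in Set.Ioi (0 : ℝ), Real.exp (u * y) * f y = Φ u)
    (φ : C(unitInterval, ℝ)) (hφ : ∀ x, 0 ≤ φ x) : 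
    0 ≤ ∫ y in Set.Ioi (0 : ℝ), φ (Set.projIcc 0 1 zero_le_one (Real.exp (-y))) * 
      (Real.exp (-2 * y) * f y) := by
  have hint := hg (-2) (by norm_num)
  have hcont : ∀ ψ : C(unitInterval, ℝ), Continuous fun y : ℝ => 
      ψ (Set.projIcc 0 1 zero_le_one (Real.exp (-y))) := fun ψ => 
    ψ.continuous.comp (continuous_projIcc.comp (by fun_prop))
  have hlim : Tendsto (fun n => ∫ y in Set.Ioi (0 : ℝ), 
      bernsteinApproximation n φ (Set.projIcc 0 1 zero_le_one (Real.exp (-y))) * 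
      (Real.exp (-2 * y) * f y)) atTop (𝓝 (∫ y in Set.Ioi (0 : ℝ), 
      φ (Set.projIcc 0 1 zero_le_one (Real.exp (-y))) * (Real.exp (-2 * y) * f y))) := by
    have hu := bernsteinApproximation_uniform φ
    have hb : ∀ᶠ n in atTop, ‖bernsteinApproximation n φ‖ ≤ ‖φ‖ + 1 := 
      hu.norm.eventually_le_const (by linarith)
    refine tendsto_integral_filter_of_dominated_convergence 
      (fun y => (‖φ‖ + 1) * ‖Real.exp (-2 * y) * f y‖) ?_ ?_ (hint.norm.const_mul _) ?_
    · exact .of_forall fun n => (hcont _).aestronglyMeasurable.mul hint.1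
    · filter_upwards [hb] with n hn
      refine .of_forall fun y => ?_
      rw [norm_mul]
      gcongr
      exact (ContinuousMap.norm_coe_le_norm _ _).trans hn
    · refine .of_forall fun y => ?_
      refine Tendsto.mul_const _ ?_
      exact ((continuous_eval_const (F := C(unitInterval, ℝ)) _).tendsto φ).comp hu
  refine ge_of_tendsto' hlim fun n => ?_
  have e : ∀ y ∈ Set.Ioi (0 : ℝ), 
      bernsteinApproximation n φ (Set.projIcc 0 1 zero_le_one (Real.exp (-y))) * 
      (Real.exp (-2 * y) * f y) = ∑ k : Fin (n + 1), (φ (bernstein.z k) * n.choose k) * 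
        (Real.exp ((-2 - k) * y) * (y ^ 0 * ((1 - Real.exp (-y)) ^ (n - k) * f y))) := by
    intro y hy
    have hy : 0 < y := hy
    have h1 : Real.exp (-y) ≤ 1 := Real.exp_le_one_iff.2 (by linarith)
    have h2 := Real.exp_pos (-y)
    rw [Set.projIcc_of_mem zero_le_one ⟨h2.le, h1⟩, bernsteinApproximation.apply, Finset.sum_mul]
    refine Finset.sum_congr rfl fun k _ => ?_
    rw [bernstein_apply, show (-2 - (k : ℕ) : ℝ) * y = -2 * y + (k : ℕ) * (-y) by ring, Real.exp_add,
      Real.exp_nat_mul, smul_eq_mul]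
    simp only
    ring
  rw [setIntegral_congr_fun measurableSet_Ioi e, integral_finsetSum]
  · refine Finset.sum_nonneg fun k _ => ?_
    rw [integral_const_mul]
    have : (0 : ℝ) ≤ (k : ℕ) := by positivity
    exact mul_nonneg (mul_nonneg (hφ _) (by positivity)) 
      (pos_pow_pow hg hΦ hfΦ _ 0 _ (by linarith))
  · intro k _
    have : (0 : ℝ) ≤ (k : ℕ) := by positivity
    exact (int_pow_pow hg 0 _ _ (by linarith)).const_mul _

lemma core_nonneg (hc : ContinuousOn f (Set.Ioi 0)) 
    (hg : ∀ u < -1, IntegrableOn (fun y => Real.exp (u * y) * f y) (Set.Ioi 0))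
    (hΦ : ∀ n, AM n Φ) (hfΦ : ∀ u < -1, ∫ y in Set.Ioi (0 : ℝ), Real.exp (u * y) * f y = Φ u) :
    ∀ y, 0 < y → 0 ≤ f y := by
  intro y0 hy0
  by_contra! hneg
  -- neighbourhood where `f` is negative
  have hev : ∀ᶠ y in 𝓝 y0, f y < 0 ∧ 0 < y := 
    ((hc.continuousAt (Ioi_mem_nhds hy0)).eventually_lt_const hneg).and (lt_mem_nhds hy0)
  have hv : ∀ᶠ v in 𝓝 (Real.exp (-y0)), f (-Real.log v) < 0 ∧ 0 < -Real.log v := by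
    have : Tendsto (fun v => -Real.log v) (𝓝 (Real.exp (-y0))) (𝓝 y0) := by
      have := (Real.continuousAt_log (Real.exp_pos (-y0)).ne').neg.tendsto
      simp only [Real.log_exp, neg_neg, Pi.neg_apply] at this
      exact this
    exact this.eventually hev
  obtain ⟨δ, hδ, hball⟩ := Metric.eventually_nhds_iff.1 hv
  let φ : C(unitInterval, ℝ) := ⟨fun v => max 0 (δ - |(v : ℝ) - Real.exp (-y0)|), by fun_prop⟩
  have h1 := pos_test hg hΦ hfΦ φ (fun x => le_max_left _ _)
  have hproj : ∀ y, 0 < y → φ (Set.projIcc 0 1 zero_le_one (Real.exp (-y))) = 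
      max 0 (δ - |Real.exp (-y) - Real.exp (-y0)|) := by
    intro y hy
    have h1 : Real.exp (-y) ≤ 1 := Real.exp_le_one_iff.2 (by linarith)
    have h2 := Real.exp_pos (-y)
    rw [Set.projIcc_of_mem zero_le_one ⟨h2.le, h1⟩]
    rfl
  set H : ℝ → ℝ := fun y => -(max 0 (δ - |Real.exp (-y) - Real.exp (-y0)|) * (Real.exp (-2 * y) * f y))
    with hH
  have hHn : ∀ y, 0 < y → 0 ≤ H y := by
    intro y hy
    simp only [hH]
    by_cases hd : |Real.exp (-y) - Real.exp (-y0)| < δ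
    · have := (hball (y := Real.exp (-y)) (by rwa [Real.dist_eq])).1
      simp only [Real.log_exp, neg_neg] at this
      have h3 : Real.exp (-2 * y) * f y ≤ 0 := mul_nonpos_of_nonneg_of_nonpos (Real.exp_nonneg _) this.le
      have := mul_nonpos_of_nonneg_of_nonpos 
        (le_max_left 0 (δ - |Real.exp (-y) - Real.exp (-y0)|)) h3
      linarith
    · rw [max_eq_left (by linarith)]; simp
  have hint : IntegrableOn H (Set.Ioi 0) := by
    refine Integrable.neg ?_
    refine (hg (-2) (by norm_num)).bdd_mul (c := δ) 
      (Continuous.aestronglyMeasurable (by fun_prop)) (.of_forall fun y => ?_)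
    rw [Real.norm_of_nonneg (le_max_left _ _)]
    exact max_le hδ.le (by linarith [abs_nonneg (Real.exp (-y) - Real.exp (-y0))])
  have h2 : ∫ y in Set.Ioi (0 : ℝ), H y = 0 := by
    refine le_antisymm ?_ (setIntegral_nonneg measurableSet_Ioi hHn)
    have : ∫ y in Set.Ioi (0 : ℝ), H y = -∫ y in Set.Ioi (0 : ℝ), 
        φ (Set.projIcc 0 1 zero_le_one (Real.exp (-y))) * (Real.exp (-2 * y) * f y) := by
      rw [← integral_neg]
      refine setIntegral_congr_fun measurableSet_Ioi fun y hy => ?_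
      simp only [hproj y hy, hH]
    linarith
  rw [setIntegral_eq_zero_iff_of_nonneg_ae 
    ((ae_restrict_iff' measurableSet_Ioi).2 (.of_forall hHn)) hint] at h2
  have h3 : Set.EqOn H (fun _ => 0) (Set.Ioi 0) := by
    refine Measure.eqOn_open_of_ae_eq h2 isOpen_Ioi ?_ continuousOn_const
    exact (ContinuousOn.mul (by fun_prop) (ContinuousOn.mul (by fun_prop) hc)).neg
  have h4 := h3 (show y0 ∈ Set.Ioi 0 from hy0)
  simp only [hH, sub_self, abs_zero, sub_zero, max_eq_right hδ.le] at h4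
  have : 0 < δ * (Real.exp (-2 * y0) * -f y0) := 
    mul_pos hδ (mul_pos (Real.exp_pos _) (by linarith))
  linarith
end core

lemma integrable_tsum_aux {μ : Measure ℝ} {F : ℕ → ℝ → ℝ} (hF : ∀ i, Integrable (F i) μ)
    (hs : Summable fun i => ∫ a, ‖F i a‖ ∂μ) :
    (∀ᵐ a ∂μ, Summable fun i => ‖F i a‖) ∧ Integrable (fun a => ∑' i, F i a) μ := by
  have h1 : ∫⁻ a, ∑' i, ‖F i a‖ₑ ∂μ < ⊤ := by
    rw [lintegral_tsum (fun i => (hF i).1.enorm)]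
    have : ∀ i, ∫⁻ a, ‖F i a‖ₑ ∂μ = ENNReal.ofReal (∫ a, ‖F i a‖ ∂μ) := by
      intro i
      rw [ofReal_integral_norm_eq_lintegral_enorm (hF i)]
    simp_rw [this]
    rw [← ENNReal.ofReal_tsum_of_nonneg (fun i => integral_nonneg fun a => norm_nonneg _) hs]
    exact ENNReal.ofReal_lt_top
  have h2 : ∀ᵐ a ∂μ, Summable fun i => ‖F i a‖ := by
    filter_upwards [ae_lt_top' (AEMeasurable.tsum fun i => (hF i).1.enorm) h1.ne] with a ha
    exact NNReal.summable_coe.2 (ENNReal.tsum_coe_ne_top_iff_summable.1 ha.ne)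
  refine ⟨h2, ?_, ?_⟩
  · refine aestronglyMeasurable_of_tendsto_ae atTop 
      (f := fun n a => ∑ i ∈ Finset.range n, F i a) (fun n => ?_) ?_
    · exact Finset.aestronglyMeasurable_fun_sum _ fun i _ => (hF i).1
    · filter_upwards [h2] with a ha
      exact ha.of_norm.hasSum.tendsto_sum_nat
  · refine lt_of_le_of_lt (lintegral_mono fun a => ?_) h1
    exact enorm_tsum_le_tsum_enorm

lemma core_int {f Φ : ℝ → ℝ} 
    (hg : ∀ u < -1, IntegrableOn (fun y => Real.exp (u * y) * f y) (Set.Ioi 0))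
    (hΦ : ∀ n, AM n Φ) (hfΦ : ∀ u < -1, ∫ y in Set.Ioi (0 : ℝ), Real.exp (u * y) * f y = Φ u)
    (hf : ∀ y, 0 < y → 0 ≤ f y) :
    ∀ u < 0, IntegrableOn (fun y => Real.exp (u * y) * f y) (Set.Ioi 0) := by
  intro u hu
  by_cases hu2 : u < -1
  · exact hg u hu2
  have hu2 : -1 ≤ u := not_lt.1 hu2
  let F : ℕ → ℝ → ℝ := fun j y => (u + 2) ^ j / j.factorial * (Real.exp (-2 * y) * (y ^ j * f y))
  have hF : ∀ j, IntegrableOn (F j) (Set.Ioi 0) := fun j => 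
    (int_pow hg j (-2) (by norm_num)).const_mul _
  have hnn : ∀ j, ∀ y ∈ Set.Ioi (0 : ℝ), 0 ≤ F j y := by
    intro j y hy
    have hy : 0 < y := hy
    have := hf y hy
    have : 0 ≤ u + 2 := by linarith
    positivity
  have hn : ∀ j, ∫ y in Set.Ioi (0 : ℝ), ‖F j y‖ = 
      (∫ y in Set.Ioi (0 : ℝ), Real.exp (-2 * y) * (y ^ j * f y)) * (u + 2) ^ j / j.factorial := by
    intro j
    have : ∫ y in Set.Ioi (0 : ℝ), ‖F j y‖ = ∫ y in Set.Ioi (0 : ℝ), F j y :=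
      setIntegral_congr_fun measurableSet_Ioi fun y hy => Real.norm_of_nonneg (hnn j y hy)
    rw [this, integral_const_mul]
    ring
  have hs : Summable fun j => ∫ y in Set.Ioi (0 : ℝ), ‖F j y‖ := by
    refine summable_of_sum_range_le (c := Φ u) (fun j => integral_nonneg fun y => norm_nonneg _) ?_
    intro n
    simp_rw [hn]
    refine AM.taylor (n := n) 
      (G := fun j u => ∫ y in Set.Ioi (0 : ℝ), Real.exp (u * y) * (y ^ j * f y)) (hΦ n) 
      (by simpa using hfΦ) ?_ u (by linarith) hu
    intro m v hv
    simp only [pow_succ', mul_assoc]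
    exact (deriv_laplace (int_pow hg m) v hv).2
  refine (integrable_tsum_aux hF hs).2.congr (.of_forall fun y => ?_)
  have h1 : HasSum (fun j : ℕ => ((u + 2) * y) ^ j / j.factorial) (Real.exp ((u + 2) * y)) := by
    rw [Real.exp_eq_exp_ℝ]
    exact NormedSpace.expSeries_div_hasSum_exp ((u + 2) * y)
  have h2 := (h1.mul_right (Real.exp (-2 * y) * f y)).tsum_eq
  have h3 : Real.exp (u * y) * f y = Real.exp ((u + 2) * y) * (Real.exp (-2 * y) * f y) := by
    rw [← mul_assoc, ← Real.exp_add]; ring_nf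
  simp only [F]
  rw [h3, ← h2]
  refine tsum_congr fun j => ?_
  rw [mul_pow]; ring

lemma core_eq {f Φ : ℝ → ℝ} (hc : ContinuousOn f (Set.Ioi 0)) 
    (hg : ∀ u < 0, IntegrableOn (fun y => Real.exp (u * y) * f y) (Set.Ioi 0))
    (hfΦ : ∀ u < -1, ∫ y in Set.Ioi (0 : ℝ), Real.exp (u * y) * f y = Φ u)
    (hf : ∀ y, 0 < y → 0 ≤ f y) (hΦ : AnalyticOnNhd ℝ Φ (Set.Iio 0)) :
    ∀ u < 0, ∫ y in Set.Ioi (0 : ℝ), Real.exp (u * y) * f y = Φ u := by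
  let μ : Measure ℝ := (volume.restrict (Set.Ioi 0)).withDensity fun y => ENNReal.ofReal (f y)
  have hm : AEMeasurable (fun y => ENNReal.ofReal (f y)) (volume.restrict (Set.Ioi 0)) :=
    (hc.aemeasurable measurableSet_Ioi).ennreal_ofReal
  have hfin : ∀ᵐ y ∂(volume.restrict (Set.Ioi (0 : ℝ))), ENNReal.ofReal (f y) < ⊤ := 
    .of_forall fun y => ENNReal.ofReal_lt_top
  have hmgf : ∀ u, ProbabilityTheory.mgf id μ u = ∫ y in Set.Ioi (0 : ℝ), Real.exp (u * y) * f y := by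
    intro u
    unfold ProbabilityTheory.mgf
    simp only [μ]
    rw [integral_withDensity_eq_integral_toReal_smul₀ hm hfin]
    refine setIntegral_congr_fun measurableSet_Ioi fun y hy => ?_
    simp only [ENNReal.toReal_ofReal (hf y hy), smul_eq_mul, id]
    ring
  have hset : Set.Iio (0 : ℝ) ⊆ ProbabilityTheory.integrableExpSet id μ := by
    intro u hu
    change Integrable (fun y => Real.exp (u * id y)) μ
    rw [integrable_withDensity_iff_integrable_smul₀' hm hfin]
    refine (integrableOn_congr_fun ?_ measurableSet_Ioi).1 (hg u hu)
    intro y hy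
    simp only [ENNReal.toReal_ofReal (hf y hy), smul_eq_mul, id]
    ring
  have hint : Set.Iio (0 : ℝ) ⊆ interior (ProbabilityTheory.integrableExpSet id μ) :=
    interior_maximal hset isOpen_Iio
  have key := AnalyticOnNhd.eqOn_of_preconnected_of_eventuallyEq 
    (ProbabilityTheory.analyticOnNhd_mgf.mono hint) hΦ isPreconnected_Iio 
    (z₀ := -2) (by norm_num) (by
      filter_upwards [Iio_mem_nhds (show (-2 : ℝ) < -1 by norm_num)] with x hx
      rw [hmgf]; exact hfΦ x hx)
  intro u hu
  rw [← hmgf]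
  exact key hu

lemma analytic_Phi (α a γ : ℝ) : AnalyticOnNhd ℝ 
    (fun u : ℝ => (-u) ^ (-a) * (1 + (-u) ^ α) ^ (-γ)) (Set.Iio 0) := by
  have hrp : ∀ (g : ℝ → ℝ) (p x : ℝ), AnalyticAt ℝ g x → 0 < g x → 
      AnalyticAt ℝ (fun u => g u ^ p) x := by
    intro g p x hg hx
    have : AnalyticAt ℝ (fun u => Real.exp (Real.log (g u) * p)) x := 
      ((hg.log hx).mul analyticAt_const).rexp'
    refine this.congr ?_
    filter_upwards [hg.continuousAt.eventually_const_lt hx] with y hy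
    rw [Real.rpow_def_of_pos hy]
  intro u hu
  have hu : u < 0 := hu
  have hn : AnalyticAt ℝ (fun u : ℝ => -u) u := analyticAt_id.neg
  have : 0 < (-u) ^ α := Real.rpow_pos_of_pos (by linarith) _
  refine (hrp _ _ _ hn (by linarith)).mul (hrp _ _ _ ?_ (by linarith))
  exact analyticAt_const.add (hrp _ _ _ hn (by linarith))

lemma choose_eq_poch (γ : ℝ) (k : ℕ) : Ring.choose (γ + k - 1) k = poch γ k / k.factorial := by
  have h1 : Ring.choose (γ + k - 1) k = Ring.multichoose γ k := by
    unfold Ring.choose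
    congr 1; ring
  rw [h1, eq_div_iff (by positivity)]
  have := Ring.factorial_nsmul_multichoose_eq_ascPochhammer γ k
  rw [nsmul_eq_mul] at this
  rw [mul_comm, this, Polynomial.ascPochhammer_smeval_eq_eval]
  unfold poch
  induction k with
  | zero => simp
  | succ k ih => 
    rw [ascPochhammer_succ_eval, Finset.prod_range_succ]
    have e1 : Ring.choose (γ + k - 1) k = Ring.multichoose γ k := by
      unfold Ring.choose
      congr 1; ring
    have e2 := Ring.factorial_nsmul_multichoose_eq_ascPochhammer γ k
    rw [nsmul_eq_mul] at e2
    rw [ih e1 e2]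

lemma poch_pos {γ : ℝ} (h : 0 < γ) (k : ℕ) : 0 < poch γ k := 
  Finset.prod_pos fun i _ => by positivity

lemma hasSum_poch (γ x : ℝ) (hx : |x| < 1) : 
    HasSum (fun k : ℕ => poch γ k / k.factorial * x ^ k) ((1 - x) ^ (-γ)) := by
  have h := (Real.one_div_one_sub_rpow_hasFPowerSeriesOnBall_zero γ).hasSum (y := x) 
    (by simpa [enorm_eq_nnnorm, ← NNReal.coe_lt_coe] using hx)
  rw [Real.rpow_neg (by linarith [(abs_lt.1 hx).2])]
  simpa [FormalMultilinearSeries.ofScalars_apply_eq, choose_eq_poch, mul_comm] using h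

section prab
variable {α β γ : ℝ}

lemma term_norm (h0 : 0 < α) (hβ : 0 < β) (hγ : 0 < γ) {u : ℝ} (hu : u < -1) (k : ℕ) :
    IntegrableOn (fun y : ℝ => Real.exp (u * y) * (y ^ (β - 1) * 
      (poch γ k * (-y ^ α) ^ k / (k.factorial * Real.Gamma (α * k + β))))) (Set.Ioi 0) ∧
    (∫ y in Set.Ioi (0 : ℝ), Real.exp (u * y) * (y ^ (β - 1) * 
      (poch γ k * (-y ^ α) ^ k / (k.factorial * Real.Gamma (α * k + β))))) = 
      (-u) ^ (-β) * (poch γ k / k.factorial * (-(-u) ^ (-α)) ^ k) ∧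
    (∫ y in Set.Ioi (0 : ℝ), ‖Real.exp (u * y) * (y ^ (β - 1) * 
      (poch γ k * (-y ^ α) ^ k / (k.factorial * Real.Gamma (α * k + β))))‖) = 
      (-u) ^ (-β) * (poch γ k / k.factorial * ((-u) ^ (-α)) ^ k) := by
  have hp : 0 < α * k + β := by positivity
  have hG := Real.Gamma_pos_of_pos hp
  have hu' : 0 < -u := by linarith
  have hf : (0 : ℝ) < k.factorial := by positivity
  have hpo := poch_pos hγ k
  have hbase := Real.integral_rpow_mul_exp_neg_mul_Ioi hp hu'
  have hbi : IntegrableOn (fun y : ℝ => y ^ (α * k + β - 1) * Real.exp (-(-u * y))) (Set.Ioi 0) := by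
    refine not_imp_comm.1 integral_undef ?_
    rw [hbase]; positivity
  set c : ℝ := poch γ k / (k.factorial * Real.Gamma (α * k + β)) with hc
  have hcpos : 0 < c := by positivity
  have e : ∀ y ∈ Set.Ioi (0 : ℝ), Real.exp (u * y) * (y ^ (β - 1) * 
      (poch γ k * (-y ^ α) ^ k / (k.factorial * Real.Gamma (α * k + β)))) = 
      (c * (-1) ^ k) * (y ^ (α * k + β - 1) * Real.exp (-(-u * y))) := by
    intro y hy
    have hy : 0 < y := hy
    rw [show α * k + β - 1 = (β - 1) + α * k by ring, Real.rpow_add hy, Real.rpow_mul hy.le, 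
      Real.rpow_natCast, show -(-u * y) = u * y by ring, neg_pow, hc]
    ring
  have hpw : (1 / -u) ^ (α * k + β) = (-u) ^ (-β) * ((-u) ^ (-α)) ^ k := by
    rw [one_div, Real.inv_rpow hu'.le, ← Real.rpow_neg hu'.le, ← Real.rpow_natCast, 
      ← Real.rpow_mul hu'.le, ← Real.rpow_add hu']
    congr 1; ring
  refine ⟨?_, ?_, ?_⟩
  · exact (integrableOn_congr_fun e measurableSet_Ioi).2 (hbi.const_mul _)
  · rw [setIntegral_congr_fun measurableSet_Ioi e, integral_const_mul, hbase, hpw, 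
      neg_pow ((-u) ^ (-α)), hc]
    field_simp
  · have e' : ∀ y ∈ Set.Ioi (0 : ℝ), ‖Real.exp (u * y) * (y ^ (β - 1) * 
      (poch γ k * (-y ^ α) ^ k / (k.factorial * Real.Gamma (α * k + β))))‖ = 
      c * (y ^ (α * k + β - 1) * Real.exp (-(-u * y))) := by
      intro y hy
      rw [e y hy, norm_mul, norm_mul, norm_pow, norm_neg, norm_one, one_pow, mul_one, 
        Real.norm_of_nonneg hcpos.le, Real.norm_of_nonneg]
      have hy : 0 < y := hy
      positivity
    rw [setIntegral_congr_fun measurableSet_Ioi e', integral_const_mul, hbase, hpw, hc]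
    field_simp

lemma rpow_abs_lt (h0 : 0 < α) {u : ℝ} (hu : u < -1) : |(-u) ^ (-α)| < 1 := by
  rw [abs_of_nonneg (Real.rpow_nonneg (by linarith) _)]
  exact Real.rpow_lt_one_of_one_lt_of_neg (by linarith) (by linarith)

lemma summable_norms (h0 : 0 < α) (hβ : 0 < β) (hγ : 0 < γ) {u : ℝ} (hu : u < -1) :
    Summable fun k : ℕ => ∫ y in Set.Ioi (0 : ℝ), ‖Real.exp (u * y) * (y ^ (β - 1) * 
      (poch γ k * (-y ^ α) ^ k / (k.factorial * Real.Gamma (α * k + β))))‖ := by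
  simp_rw [fun k => (term_norm h0 hβ hγ hu k).2.2]
  exact (hasSum_poch γ _ (rpow_abs_lt h0 hu)).summable.mul_left _

lemma prab_int (h0 : 0 < α) (hβ : 0 < β) (hγ : 0 < γ) {u : ℝ} (hu : u < -1) :
    IntegrableOn (fun y => Real.exp (u * y) * (y ^ (β - 1) * prabhakarR α β γ (-y ^ α))) (Set.Ioi 0) 
    ∧ ∫ y in Set.Ioi (0 : ℝ), Real.exp (u * y) * (y ^ (β - 1) * prabhakarR α β γ (-y ^ α)) = 
      (-u) ^ (-(β - α * γ)) * (1 + (-u) ^ α) ^ (-γ) := by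
  have hu' : 0 < -u := by linarith
  have e : (fun y : ℝ => Real.exp (u * y) * (y ^ (β - 1) * prabhakarR α β γ (-y ^ α))) = 
      fun y => ∑' k : ℕ, Real.exp (u * y) * (y ^ (β - 1) * 
      (poch γ k * (-y ^ α) ^ k / (k.factorial * Real.Gamma (α * k + β)))) := by
    funext y
    rw [tsum_mul_left, tsum_mul_left]; rfl
  rw [e]
  refine ⟨(integrable_tsum_aux (fun k => (term_norm h0 hβ hγ hu k).1) 
    (summable_norms h0 hβ hγ hu)).2, ?_⟩
  rw [← integral_tsum_of_summable_integral_norm (fun k => (term_norm h0 hβ hγ hu k).1) 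
    (summable_norms h0 hβ hγ hu)]
  simp_rw [fun k => (term_norm h0 hβ hγ hu k).2.1]
  rw [tsum_mul_left, (hasSum_poch γ _ (by rw [abs_neg]; exact rpow_abs_lt h0 hu)).tsum_eq]
  have hx : 0 < (-u) ^ α := Real.rpow_pos_of_pos hu' _
  have h1 : 1 - -(-u) ^ (-α) = (1 + (-u) ^ α) * (-u) ^ (-α) := by
    rw [Real.rpow_neg hu'.le]; field_simp; ring
  rw [h1, Real.mul_rpow (by positivity) (by positivity), ← Real.rpow_mul hu'.le, 
    show -(β - α * γ) = -β + -α * -γ by ring, Real.rpow_add hu']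
  ring

lemma prab_summable (h0 : 0 < α) (hβ : 0 < β) (hγ : 0 < γ) (T : ℝ) (hT : 0 < T) : 
    Summable fun k : ℕ => poch γ k * T ^ k / (k.factorial * Real.Gamma (α * k + β)) := by
  have hu : (-2 : ℝ) < -1 := by norm_num
  have h := (integrable_tsum_aux (fun k => (term_norm h0 hβ hγ hu k).1) 
    (summable_norms h0 hβ hγ hu)).1
  rw [ae_restrict_iff' measurableSet_Ioi] at h
  have hne : ∃ y, T ^ (α⁻¹) < y ∧ (y ∈ Set.Ioi (0 : ℝ) → Summable fun k : ℕ => 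
      ‖Real.exp (-2 * y) * (y ^ (β - 1) * 
      (poch γ k * (-y ^ α) ^ k / (k.factorial * Real.Gamma (α * k + β))))‖) := by
    by_contra! hcon
    have : volume (Set.Ioi (T ^ α⁻¹)) = 0 := by
      refine measure_mono_null (fun y hy => ?_) h
      have := hcon y hy
      simp only [Set.mem_compl_iff, Set.mem_ofPred_eq]
      tauto
    simp at this
  obtain ⟨y, hy, hsum⟩ := hne
  have hTp : 0 < T ^ α⁻¹ := Real.rpow_pos_of_pos hT _
  have hy0 : 0 < y := hTp.trans hy
  have hs := (hsum hy0).mul_left ((Real.exp (-2 * y) * y ^ (β - 1))⁻¹)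
  have hTy : T ≤ y ^ α := by
    have : (T ^ α⁻¹) ^ α ≤ y ^ α := by gcongr
    rwa [← Real.rpow_mul hT.le, inv_mul_cancel₀ h0.ne', Real.rpow_one] at this
  refine Summable.of_nonneg_of_le (fun k => ?_) (fun k => ?_) hs
  · have := poch_pos hγ k
    have : 0 < Real.Gamma (α * k + β) := Real.Gamma_pos_of_pos (by positivity)
    positivity
  · have h1 := poch_pos hγ k
    have h2 : 0 < Real.Gamma (α * k + β) := Real.Gamma_pos_of_pos (by positivity)
    have h3 : 0 < Real.exp (-2 * y) * y ^ (β - 1) := by positivity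
    rw [← mul_assoc (Real.exp _), norm_mul, Real.norm_of_nonneg h3.le, inv_mul_cancel_left₀ h3.ne', 
      norm_div, norm_mul, norm_pow, norm_neg, Real.norm_of_nonneg h1.le, 
      Real.norm_of_nonneg (by positivity), Real.norm_of_nonneg (by positivity)]
    gcongr

lemma prab_cont (h0 : 0 < α) (hβ : 0 < β) (hγ : 0 < γ) : Continuous (prabhakarR α β γ) := by
  rw [continuous_iff_continuousAt]
  intro x
  have hT : 0 < |x| + 1 := by positivity
  have : ContinuousOn (prabhakarR α β γ) (Set.Icc (-(|x| + 1)) (|x| + 1)) := by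
    refine continuousOn_tsum (fun k => by fun_prop) (prab_summable h0 hβ hγ _ hT) ?_
    intro k t ht
    have h1 := poch_pos hγ k
    have h2 : 0 < Real.Gamma (α * k + β) := Real.Gamma_pos_of_pos (by positivity)
    rw [norm_div, norm_mul, norm_pow, Real.norm_of_nonneg h1.le, 
      Real.norm_of_nonneg (r := _ * _) (by positivity)]
    have : ‖t‖ ≤ |x| + 1 := abs_le.2 ht
    gcongr
  refine this.continuousAt (Icc_mem_nhds ?_ ?_)
  · linarith [neg_abs_le x]
  · linarith [le_abs_self x]

lemma prab_main (h0 : 0 < α) (h1 : α < 1) (hγ : 0 < γ) (hγβ : α * γ ≤ β) (hβ : 0 < β) : 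
    (∀ y, 0 < y → 0 ≤ y ^ (β - 1) * prabhakarR α β γ (-y ^ α)) ∧ ∀ u < 0, 
    IntegrableOn (fun y => Real.exp (u * y) * (y ^ (β - 1) * prabhakarR α β γ (-y ^ α))) (Set.Ioi 0) 
    ∧ ∫ y in Set.Ioi (0 : ℝ), Real.exp (u * y) * (y ^ (β - 1) * prabhakarR α β γ (-y ^ α)) = 
      (-u) ^ (-(β - α * γ)) * (1 + (-u) ^ α) ^ (-γ) := by
  have hc : ContinuousOn (fun y : ℝ => y ^ (β - 1) * prabhakarR α β γ (-y ^ α)) (Set.Ioi 0) := by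
    refine ContinuousOn.mul ?_ ((prab_cont h0 hβ hγ).comp_continuousOn ?_)
    · exact fun y hy => (Real.continuousAt_rpow_const _ _ (Or.inl (ne_of_gt hy))).continuousWithinAt
    · exact fun y hy => 
        (Real.continuousAt_rpow_const _ _ (Or.inl (ne_of_gt hy))).neg.continuousWithinAt
  have hΦ : ∀ n, AM n (fun u => (-u) ^ (-(β - α * γ)) * (1 + (-u) ^ α) ^ (-γ)) := fun n => 
    (AM.rpow_neg (by linarith)).mul (AM.stieltjes h0 h1 hγ)
  have hg := fun u hu => (prab_int h0 hβ hγ (u := u) hu).1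
  have hf := fun u hu => (prab_int h0 hβ hγ (u := u) hu).2
  have hnn := core_nonneg hc hg hΦ hf
  have hint := core_int hg hΦ hf hnn
  exact ⟨hnn, fun u hu => ⟨hint u hu, core_eq hc hint hf hnn (analytic_Phi α _ γ) u hu⟩⟩
end prab

lemma mellin_laplace {g G : ℝ → ℝ} {w : ℂ} (hw : 0 < w.re) 
    (hm : AEStronglyMeasurable g (volume.restrict (Set.Ioi 0)))
    (hg : ∀ y, 0 < y → 0 ≤ g y)
    (hi : ∀ l, 0 < l → IntegrableOn (fun y => Real.exp (-l * y) * g y) (Set.Ioi 0))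
    (hG : ∀ l, 0 < l → ∫ y in Set.Ioi (0 : ℝ), Real.exp (-l * y) * g y = G l)
    (hc : MellinConvergent (fun l => (G l : ℂ)) w) :
    Complex.Gamma w * mellin (fun y => (g y : ℂ)) (1 - w) = mellin (fun l => (G l : ℂ)) w := by
  let K : ℝ → ℝ → ℂ := fun l y => (l : ℂ) ^ (w - 1) * ((Real.exp (-l * y) * g y : ℝ) : ℂ)
  have hKn : ∀ l, 0 < l → ∀ y, 0 < y → ‖K l y‖ = l ^ (w.re - 1) * (Real.exp (-l * y) * g y) := by
    intro l hl y hy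
    simp only [K]
    rw [norm_mul, Complex.norm_cpow_eq_rpow_re_of_pos hl, Complex.norm_real, Real.norm_of_nonneg
      (mul_nonneg (Real.exp_nonneg _) (hg y hy))]
    simp
  have hint : Integrable (Function.uncurry K) 
      ((volume.restrict (Set.Ioi 0)).prod (volume.restrict (Set.Ioi 0))) := by
    rw [integrable_prod_iff]
    · constructor
      · filter_upwards [ae_restrict_mem measurableSet_Ioi] with l hl
        exact (Integrable.ofReal (𝕜 := ℂ) (hi l hl)).const_mul ((l : ℂ) ^ (w - 1))
      · have : IntegrableOn (fun l : ℝ => ‖(l : ℂ) ^ (w - 1) • (G l : ℂ)‖) (Set.Ioi 0) := 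
          Integrable.norm hc
        refine (integrableOn_congr_fun ?_ measurableSet_Ioi).1 this
        intro l hl
        have hl : 0 < l := hl
        have e1 : ∫ y in Set.Ioi (0 : ℝ), ‖K l y‖ = l ^ (w.re - 1) * G l := by
          rw [setIntegral_congr_fun measurableSet_Ioi (fun y hy => hKn l hl y hy), 
            integral_const_mul, hG l hl]
        have hGn : 0 ≤ G l := by
          rw [← hG l hl]
          exact setIntegral_nonneg measurableSet_Ioi fun y hy => 
            mul_nonneg (Real.exp_nonneg _) (hg y hy)
        simp only [Function.uncurry]
        rw [e1, norm_smul, Complex.norm_cpow_eq_rpow_re_of_pos hl, Complex.norm_real, 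
          Real.norm_of_nonneg hGn]
        simp
    · have h1 : Measurable fun p : ℝ × ℝ => (p.1 : ℂ) ^ (w - 1) := by fun_prop
      have h2 : Measurable fun p : ℝ × ℝ => ((Real.exp (-p.1 * p.2) : ℝ) : ℂ) := by fun_prop
      have h3 := (Complex.continuous_ofReal.comp_aestronglyMeasurable hm).comp_snd 
        (μ := volume.restrict (Set.Ioi (0 : ℝ)))
      refine (h1.aestronglyMeasurable.mul (h2.aestronglyMeasurable.mul h3)).congr 
        (.of_forall fun p => ?_)
      simp [K, Function.uncurry]
  have hswap := integral_integral_swap hint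
  have hL : ∫ l in Set.Ioi (0 : ℝ), ∫ y in Set.Ioi (0 : ℝ), K l y = mellin (fun l => (G l : ℂ)) w := by
    unfold mellin
    refine setIntegral_congr_fun measurableSet_Ioi fun l hl => ?_
    simp only [K]
    rw [integral_const_mul, integral_complex_ofReal, hG l hl, smul_eq_mul]
  have hR : ∫ y in Set.Ioi (0 : ℝ), ∫ l in Set.Ioi (0 : ℝ), K l y = 
      Complex.Gamma w * mellin (fun y => (g y : ℂ)) (1 - w) := by
    unfold mellin
    rw [← integral_const_mul]
    refine setIntegral_congr_fun measurableSet_Ioi fun y hy => ?_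
    have hy : 0 < y := hy
    have := Complex.integral_cpow_mul_exp_neg_mul_Ioi hw hy
    have e : ∀ l : ℝ, K l y = ((l : ℂ) ^ (w - 1) * Complex.exp (-(y * l))) * g y := by
      intro l
      simp only [K]
      push_cast
      rw [show -(l : ℂ) * y = -(y * l) by ring]; ring
    simp only [e]
    rw [integral_mul_const]
    have h2 : ((1 : ℂ) / y) ^ w = (y : ℂ) ^ (1 - w - 1) := by
      rw [show 1 - w - 1 = -w by ring, one_div, Complex.cpow_neg, Complex.inv_cpow]
      rw [Complex.arg_ofReal_of_nonneg hy.le]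
      exact Real.pi_pos.ne
    rw [this, h2, smul_eq_mul]
    ring
  rw [← hL, ← hR, hswap]

lemma beta_conv {γ : ℝ} {p : ℂ} (h0 : 0 < p.re) (h1 : p.re < γ) : 
    MellinConvergent (fun l : ℝ => (((1 + l) ^ (-γ) : ℝ) : ℂ)) p := by
  have hγ : 0 < γ := h0.trans h1
  refine mellinConvergent_of_isBigO_rpow (a := γ) (b := 0) ?_ ?_ h1 ?_ h0
  · refine ContinuousOn.locallyIntegrableOn ?_ measurableSet_Ioi
    refine Complex.continuous_ofReal.comp_continuousOn ?_
    refine ContinuousOn.rpow_const (by fun_prop) fun x hx => Or.inl ?_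
    have hx : 0 < x := hx
    positivity
  · refine Asymptotics.IsBigO.of_bound 1 ?_
    filter_upwards [eventually_gt_atTop 0] with x hx
    rw [Complex.norm_real, one_mul, Real.norm_of_nonneg (by positivity), 
      Real.norm_of_nonneg (by positivity)]
    exact Real.rpow_le_rpow_of_nonpos hx (by linarith) (by linarith)
  · refine Asymptotics.IsBigO.of_bound 1 ?_
    filter_upwards [self_mem_nhdsWithin] with x hx
    have hx : 0 < x := hx
    rw [Complex.norm_real, one_mul, Real.norm_of_nonneg (by positivity)]
    simp only [neg_zero, Real.rpow_zero, norm_one]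
    exact Real.rpow_le_one_of_one_le_of_nonpos (by linarith) (by linarith)

lemma beta_mellin {γ : ℝ} {p : ℂ} (h0 : 0 < p.re) (h1 : p.re < γ) : 
    Complex.Gamma γ * mellin (fun l : ℝ => (((1 + l) ^ (-γ) : ℝ) : ℂ)) p = 
      Complex.Gamma p * Complex.Gamma (γ - p) := by
  have hγ : 0 < γ := h0.trans h1
  have hb : ∀ l : ℝ, 0 < l → ∫ y in Set.Ioi (0 : ℝ), Real.exp (-l * y) * (y ^ (γ - 1) * Real.exp (-y)) 
      = Real.Gamma γ * (1 + l) ^ (-γ) := by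
    intro l hl
    have := Real.integral_rpow_mul_exp_neg_mul_Ioi hγ (r := 1 + l) (by positivity)
    rw [one_div, Real.inv_rpow (by positivity), ← Real.rpow_neg (by positivity), mul_comm] at this
    rw [← this]
    refine integral_congr_ae (.of_forall fun y => ?_)
    simp only
    rw [show -((1 + l) * y) = -l * y + -y by ring, Real.exp_add]; ring
  have key := mellin_laplace (g := fun y => y ^ (γ - 1) * Real.exp (-y)) 
    (G := fun l => Real.Gamma γ * (1 + l) ^ (-γ)) h0 ?_ ?_ ?_ hb ?_
  · have e1 : mellin (fun y : ℝ => ((y ^ (γ - 1) * Real.exp (-y) : ℝ) : ℂ)) (1 - p) = 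
        Complex.Gamma (γ - p) := by
      rw [Complex.Gamma_eq_integral (by simpa using h1), Complex.GammaIntegral]
      unfold mellin
      refine setIntegral_congr_fun measurableSet_Ioi fun y hy => ?_
      have hy : 0 < y := hy
      have hyc : (y : ℂ) ≠ 0 := by exact_mod_cast hy.ne'
      simp only
      rw [Complex.ofReal_mul, Complex.ofReal_cpow hy.le, smul_eq_mul, ← mul_assoc, 
        ← Complex.cpow_add _ _ hyc, mul_comm]
      congr 2
      push_cast; ring
    rw [e1] at key
    rw [key]
    have := mellin_const_smul (fun l : ℝ => (((1 + l) ^ (-γ) : ℝ) : ℂ)) p (Complex.Gamma γ)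
    simp only [smul_eq_mul] at this
    rw [← this]
    congr 1
    funext l; rw [Complex.Gamma_ofReal, Complex.ofReal_mul]
  · exact Measurable.aestronglyMeasurable (by fun_prop)
  · intro y hy; positivity
  · intro l hl
    refine not_imp_comm.1 integral_undef ?_
    rw [hb l hl]
    have := Real.Gamma_pos_of_pos hγ
    positivity
  · have := (beta_conv h0 h1).const_smul (Real.Gamma γ : ℂ)
    refine this.congr (.of_forall fun l => ?_)
    simp

/-- Mellin transform of the Prabhakar function:
`∫_0^∞ E_{α,β}^γ(-t) t^{s-1} dt = Γ(s)Γ(γ-s)/(Γ(γ)Γ(β-αs))` for `0 < Re s < γ` and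
`0 < α < 1`, `0 < αγ ≤ β ≤ 1`. -/
theorem prabhakar_mellin (α β γ : ℝ) (s : ℂ)
    (hα0 : 0 < α) (hα1 : α < 1) (hγ : 0 < α * γ) (hγβ : α * γ ≤ β) (hβ : β ≤ 1)
    (hs0 : 0 < s.re) (hsγ : s.re < γ) :
    ∫ t in Set.Ioi (0 : ℝ), (prabhakarR α β γ (-t) : ℂ) * (t : ℂ) ^ (s - 1) =
      Complex.Gamma s * Complex.Gamma (γ - s) /
        (Complex.Gamma γ * Complex.Gamma (β - α * s)) := by
  have hγ0 : 0 < γ := hs0.trans hsγ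
  have hβ0 : 0 < β := hγ.trans_le hγβ
  have hαc : (α : ℂ) ≠ 0 := by exact_mod_cast hα0.ne'
  obtain ⟨hnn, hmain⟩ := prab_main hα0 hα1 hγ0 hγβ hβ0
  have hw : 0 < ((β : ℂ) - α * s).re := by
    simp
    nlinarith
  have hp0 : 0 < ((γ : ℂ) - s).re := by simpa using hsγ
  have hp1 : ((γ : ℂ) - s).re < γ := by simpa using hs0
  -- the Laplace side
  have hcong : ∀ l ∈ Set.Ioi (0 : ℝ), (l : ℂ) ^ ((β : ℂ) - α * s - 1) • 
      ((l ^ (-(β - α * γ)) * (1 + l ^ α) ^ (-γ) : ℝ) : ℂ) = 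
      (l : ℂ) ^ ((α : ℂ) * (γ - s) - 1) • (((1 + l ^ α) ^ (-γ) : ℝ) : ℂ) := by
    intro l hl
    have hl : 0 < l := hl
    have hlc : (l : ℂ) ≠ 0 := by exact_mod_cast hl.ne'
    rw [Complex.ofReal_mul, Complex.ofReal_cpow hl.le, smul_eq_mul, smul_eq_mul, ← mul_assoc, 
      ← Complex.cpow_add _ _ hlc]
    congr 2
    push_cast; ring
  have hdiv : (α : ℂ) * (γ - s) / α = γ - s := by field_simp
  have hconv : MellinConvergent 
      (fun l => ((l ^ (-(β - α * γ)) * (1 + l ^ α) ^ (-γ) : ℝ) : ℂ)) (β - α * s) := by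
    have h1 := beta_conv hp0 hp1
    rw [← hdiv, ← MellinConvergent.comp_rpow hα0.ne'] at h1
    exact (integrableOn_congr_fun hcong measurableSet_Ioi).2 h1
  have key := mellin_laplace (g := fun y => y ^ (β - 1) * prabhakarR α β γ (-y ^ α))
    (G := fun l => l ^ (-(β - α * γ)) * (1 + l ^ α) ^ (-γ)) hw ?_ hnn ?_ ?_ hconv
  · have hR : mellin (fun l => ((l ^ (-(β - α * γ)) * (1 + l ^ α) ^ (-γ) : ℝ) : ℂ)) (β - α * s) = 
        (α : ℂ)⁻¹ * mellin (fun l : ℝ => (((1 + l) ^ (-γ) : ℝ) : ℂ)) (γ - s) := by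
      have := mellin_comp_rpow (fun l : ℝ => (((1 + l) ^ (-γ) : ℝ) : ℂ)) (α * (γ - s)) α
      rw [hdiv, abs_of_pos hα0, Complex.real_smul] at this
      rw [← Complex.ofReal_inv, ← this]
      exact setIntegral_congr_fun measurableSet_Ioi hcong
    have hL : mellin (fun y => ((y ^ (β - 1) * prabhakarR α β γ (-y ^ α) : ℝ) : ℂ)) 
        (1 - (β - α * s)) = (α : ℂ)⁻¹ * ∫ t in Set.Ioi (0 : ℝ), 
          (prabhakarR α β γ (-t) : ℂ) * (t : ℂ) ^ (s - 1) := by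
      have := mellin_comp_rpow (fun t : ℝ => ((prabhakarR α β γ (-t) : ℝ) : ℂ)) (α * s) α
      rw [mul_div_cancel_left₀ _ hαc, abs_of_pos hα0, Complex.real_smul] at this
      have e : ∫ t in Set.Ioi (0 : ℝ), (prabhakarR α β γ (-t) : ℂ) * (t : ℂ) ^ (s - 1) = 
          mellin (fun t : ℝ => ((prabhakarR α β γ (-t) : ℝ) : ℂ)) s := by
        unfold mellin
        simp only [smul_eq_mul, mul_comm]
      rw [e, ← Complex.ofReal_inv, ← this]
      refine setIntegral_congr_fun measurableSet_Ioi fun y hy => ?_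
      have hy : 0 < y := hy
      have hyc : (y : ℂ) ≠ 0 := by exact_mod_cast hy.ne'
      simp only
      rw [Complex.ofReal_mul, Complex.ofReal_cpow hy.le, smul_eq_mul, smul_eq_mul, ← mul_assoc, 
        ← Complex.cpow_add _ _ hyc]
      congr 2
      push_cast; ring
    have hb := beta_mellin hp0 hp1
    rw [hL, hR] at key
    have hG1 : Complex.Gamma γ ≠ 0 := Complex.Gamma_ne_zero_of_re_pos (by simpa using hγ0)
    have hG2 : Complex.Gamma (β - α * s) ≠ 0 := Complex.Gamma_ne_zero_of_re_pos hw
    rw [sub_sub_cancel] at hb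
    rw [eq_div_iff (mul_ne_zero hG1 hG2), mul_comm (Complex.Gamma s), ← hb]
    field_simp at key
    linear_combination Complex.Gamma γ * key
  · have h1 : Measurable (prabhakarR α β γ) := (prab_cont hα0 hβ0 hγ0).measurable
    exact Measurable.aestronglyMeasurable (by fun_prop)
  · intro l hl
    exact (hmain (-l) (by linarith)).1
  · intro l hl
    simpa using (hmain (-l) (by linarith)).2
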